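/- Let k be a field, n ≥ 1, and let (E, α) be an oriented signed graph on vertex set {1,…,n}. Let φ : k[U_e : e ∈ E] → k[t_1^{±1}, …, t_n^{±1}] be the k-algebra homomorphism sending U_e to the Laurent monomial t^{α_e} = t_1^{(α_e)_1} ⋯ t_n^{(α_e)_n}. Then the toric ideal ker φ is generated, as an ideal of k[U_e : e ∈ E], by the cycle binomials U(C) of those cycles C of the signed covering of (E, α) that are not fixed orientation-wise by the involution. Moreover the cycle binomial of every cycle that is fixed orientation-wise by the involution equals zero, so ker φ is equally generated by the cycle binomials of all cycles of the signed covering. -/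

import Mathlib

open scoped Classical

noncomputable section

/-- Signed index set `±[n]`: `(true, i)` represents `+i`, `(false, i)` represents `-i`. -/
abbrev SIdx (n : ℕ) := Bool × Fin n

/-- Negation `a ↦ -a` on `±[n]`. -/
def negS {n : ℕ} (a : SIdx n) : SIdx n := (!a.1, a.2)

/-- Negation on `±[n] ∪ {0}`, fixing `0`. -/
def negO {n : ℕ} : Option (SIdx n) → Option (SIdx n)
  | none => none
  | some a => some (negS a)

/-- Standard basis vector `e_i` of `ℤ^n`. -/
def stdZ (n : ℕ) (i : Fin n) : Fin n → ℤ := Pi.single i 1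

/-- `zsgn true = 1`, `zsgn false = -1`. -/
def zsgn (s : Bool) : ℤ := if s then 1 else -1

/-- `v` on `±[n] ∪ {0}` with values in `ℤ^n`: `v(±i) = ±e_i`, `v(0) = 0`. -/
def vZ {n : ℕ} : Option (SIdx n) → (Fin n → ℤ)
  | none => 0
  | some a => zsgn a.1 • stdZ n a.2

/-- The allowed shapes for the vector of an edge of an oriented signed graph:
a link `±e_i ± e_j` (`i ≠ j`), a negative loop `±2e_i`, a half edge `±e_i`,
or `0` (a positive loop). -/
def IsOSGVec (n : ℕ) (x : Fin n → ℤ) : Prop :=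
  (∃ i j : Fin n, i ≠ j ∧ ∃ s t : Bool, x = zsgn s • stdZ n i + zsgn t • stdZ n j) ∨
  (∃ i : Fin n, ∃ s : Bool, x = (2 * zsgn s) • stdZ n i) ∨
  (∃ i : Fin n, ∃ s : Bool, x = zsgn s • stdZ n i) ∨ x = 0

/-- The arcs of the signed covering of the oriented signed graph `(E, α)` (with `ℓ e` the
distinguished vertex of a positive loop `e`): for `α e ≠ 0`, all pairs `(a, b)` with
`v(a) - v(b) = α e`; for a positive loop, the two self-loops at `±ℓ e`. -/
def Arc {n : ℕ} {E : Type} (α : E → (Fin n → ℤ)) (ℓ : E → Fin n) (e : E)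
    (a b : Option (SIdx n)) : Prop :=
  (α e ≠ 0 ∧ vZ a - vZ b = α e) ∨ (α e = 0 ∧ ∃ s : Bool, a = some (s, ℓ e) ∧ b = a)

/-- A cycle of the signed covering: pairwise distinct vertices `a_0, …, a_len` cyclically
arranged, edges `e_0, …, e_len` and signs `σ_0, …, σ_len`, where the `k`-th edge joins
`a_k` to `a_{k+1}` (indices mod `len + 1`), traversed forwards if `σ_k = +` and
backwards if `σ_k = -`. -/
structure SCycle (n : ℕ) (E : Type) (α : E → (Fin n → ℤ)) (ℓ : E → Fin n) where
  len : ℕ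
  vtx : Fin (len + 1) → Option (SIdx n)
  edg : Fin (len + 1) → E
  sg : Fin (len + 1) → Bool
  inj : Function.Injective vtx
  valid : ∀ m : Fin (len + 1),
    if sg m then Arc α ℓ (edg m) (vtx m) (vtx (m + 1))
    else Arc α ℓ (edg m) (vtx (m + 1)) (vtx m)

/-- The cycle binomial `U(C) = ∏_{σ_k = +} U_{e_k} - ∏_{σ_k = -} U_{e_k}`. -/
def cycBin {n : ℕ} {E : Type} {α : E → (Fin n → ℤ)} {ℓ : E → Fin n}
    (k : Type) [Field k] (C : SCycle n E α ℓ) : MvPolynomial E k :=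
  (∏ m ∈ Finset.univ.filter (fun m => C.sg m = true), MvPolynomial.X (C.edg m)) -
    ∏ m ∈ Finset.univ.filter (fun m => C.sg m = false), MvPolynomial.X (C.edg m)

/-- `C` is fixed orientation-wise by the involution: its negation `ι(C)` (negated vertices,
same edges, reversed signs) coincides with `C` after a cyclic rotation of the starting
point. -/
def FixedInv {n : ℕ} {E : Type} {α : E → (Fin n → ℤ)} {ℓ : E → Fin n}
    (C : SCycle n E α ℓ) : Prop :=
  ∃ r : Fin (C.len + 1), ∀ m : Fin (C.len + 1),
    C.vtx (m + r) = negO (C.vtx m) ∧ C.edg (m + r) = C.edg m ∧ C.sg (m + r) = !C.sg m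

/-- The `k`-algebra map `φ : k[U_e : e ∈ E] → k[t_1^{±1}, …, t_n^{±1}]`, `U_e ↦ t^{α_e}`. -/
def laurentHom (n : ℕ) (k : Type) [Field k] (E : Type) (α : E → (Fin n → ℤ)) :
    MvPolynomial E k →ₐ[k] AddMonoidAlgebra k (Fin n →₀ ℤ) :=
  MvPolynomial.aeval (fun e =>
    AddMonoidAlgebra.single (Finsupp.equivFunOnFinite.symm (α e)) 1)

/-!
Every edge vector of an oriented signed graph has the form `v(p) - v(q)`, and, because
`v(-p) = -v(p)`, such an edge labels an arc of the covering out of `p` and one out of `-q`.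
A binomial of `ker φ` is given by a multiset `M` of signed edges whose signed vectors sum to zero.
A positive loop in `M` is itself a cycle. Otherwise start with any arc `a → b` labelled by an
element of `M` and walk on through unused elements of `M`. At a vertex `b ≠ a` the unused vectors
sum to `v(b) - v(a)`, which has positive inner product with `v(b)`, or odd coordinate sum if
`b = 0`; so some unused element labels an arc out of `b`, and the walk stops only when it is back
at `a`. Shortcutting repeated vertices gives a cycle `C` inside `M`.
Since `xx' - yy' = x'(x - y) + y(x' - y')`, the binomial of `M` then reduces to `U(C)` and to the
binomial of the smaller multiset `M - C`.
-/

open MvPolynomial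

section ToricIdeal

variable {ι A R : Type*} [AddCommMonoid A]

lemma aeval_single_prod_map_X [CommSemiring R] (a : ι → A) (S : Multiset ι) :
    aeval (R := R) (fun i => AddMonoidAlgebra.single (a i) (1 : R)) (S.map X).prod =
      AddMonoidAlgebra.single (S.map a).sum 1 := by
  induction S using Multiset.induction_on with
  | empty => exact map_one _
  | cons i S ih => simp [ih, AddMonoidAlgebra.single_mul_single]

lemma smul_prod_map_X_toMultiset [CommSemiring R] (u : ι →₀ ℕ) (c : R) :
    c • (u.toMultiset.map X).prod = monomial u c := by
  rw [Finsupp.toMultiset_map, Finsupp.prod_toMultiset,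
    Finsupp.prod_mapDomain_index (fun _ => pow_zero _) (fun _ _ _ => pow_add _ _ _),
    monomial_eq, smul_eq_C_mul]

theorem ker_aeval_single [CommRing R] (a : ι → A) :
    RingHom.ker (aeval (R := R) fun i => AddMonoidAlgebra.single (a i) (1 : R)) =
      Ideal.span {f | ∃ S T : Multiset ι, (S.map a).sum = (T.map a).sum ∧
        f = (S.map X).prod - (T.map X).prod} := by
  set φ := aeval (R := R) fun i => AddMonoidAlgebra.single (a i) (1 : R)
  set I : Ideal (MvPolynomial ι R) := Ideal.span _
  apply le_antisymm
  · let lift : A → Multiset ι := Function.invFun fun S => (S.map a).sum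
    have sum_map_lift (S : Multiset ι) : ((lift (S.map a).sum).map a).sum = (S.map a).sum :=
      Function.invFun_eq (f := fun S : Multiset ι => (S.map a).sum) ⟨S, rfl⟩
    let ψ := (AddMonoidAlgebra.basis A R).constr R fun d => ((lift d).map (X (R := R))).prod
    have sub_lift_mem : ∀ f, f - ψ (φ f) ∈ I := by
      intro f
      induction f using MvPolynomial.induction_on' with
      | monomial u c =>
        have hlift : ψ (φ (u.toMultiset.map X).prod) =
            ((lift (u.toMultiset.map a).sum).map X).prod := by
          rw [aeval_single_prod_map_X, ← AddMonoidAlgebra.basis_apply, Module.Basis.constr_basis]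
        rw [← smul_prod_map_X_toMultiset, map_smul, map_smul, hlift, ← smul_sub]
        exact I.smul_of_tower_mem c
          (Ideal.subset_span ⟨_, _, (sum_map_lift _).symm, rfl⟩)
      | add f g hf hg =>
        rw [map_add, map_add, add_sub_add_comm]
        exact I.add_mem hf hg
    intro f hf
    have hφf : φ f = 0 := hf
    simpa [hφf] using sub_lift_mem f
  · rw [Ideal.span_le]
    rintro _ ⟨S, T, hST, rfl⟩
    change φ _ = 0
    rw [map_sub, aeval_single_prod_map_X, aeval_single_prod_map_X, hST, sub_self]

end ToricIdeal

section SimplePath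

variable {V P G : Type*} [AddCommGroup G] {v : V → G} {w : P → G}

/-- A path `x 0, …, x m` with pairwise distinct vertices and labels `p 0, …, p (m - 1)`, in the
multigraph having an arc from `a` to `b` labelled `q` whenever `v a - v b = w q`. -/
structure IsSimplePath (v : V → G) (w : P → G) {m : ℕ} (x : Fin (m + 1) → V) (p : Fin m → P) :
    Prop where
  injective : Function.Injective x
  step : ∀ i : Fin m, v (x i.castSucc) - v (x i.succ) = w (p i)

namespace IsSimplePath

lemma cons {m : ℕ} {x : Fin (m + 1) → V} {p : Fin m → P} (h : IsSimplePath v w x p) {a : V}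
    {q : P} (ha : a ∉ Set.range x) (hq : v a - v (x 0) = w q) :
    IsSimplePath v w (Fin.cons a x : Fin (m + 2) → V) (Fin.cons q p : Fin (m + 1) → P) where
  injective := Fin.cons_injective_iff.2 ⟨ha, h.injective⟩
  step := Fin.cases hq h.step

lemma tail {m : ℕ} {x : Fin (m + 2) → V} {p : Fin (m + 1) → P} (h : IsSimplePath v w x p) :
    IsSimplePath v w (Fin.tail x) (Fin.tail p) where
  injective := h.injective.comp (Fin.succ_injective _)
  step i := h.step i.succ

lemma exists_suffix {m : ℕ} {x : Fin (m + 1) → V} {p : Fin m → P} (h : IsSimplePath v w x p)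
    (j : Fin (m + 1)) :
    ∃ (l : ℕ) (y : Fin (l + 1) → V) (q : Fin l → P), IsSimplePath v w y q ∧ y 0 = x j ∧
      y (Fin.last l) = x (Fin.last m) ∧ List.ofFn q <:+ List.ofFn p := by
  induction m with
  | zero =>
    exact ⟨0, x, p, h, congrArg x (Subsingleton.elim (α := Fin 1) _ _), rfl, List.suffix_rfl⟩
  | succ m ih =>
    cases j using Fin.cases with
    | zero => exact ⟨m + 1, x, p, h, rfl, rfl, List.suffix_rfl⟩
    | succ j =>
      obtain ⟨l, y, q, hy, hy_zero, hy_last, hq⟩ := ih h.tail j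
      refine ⟨l, y, q, hy, hy_zero, hy_last, hq.trans ?_⟩
      rw [List.ofFn_succ (f := p)]
      exact List.suffix_cons _ _

end IsSimplePath

lemma exists_isSimplePath_of_sum_eq
    (exists_step : ∀ (N : Multiset P) (a c : V), a ≠ c → (N.map w).sum = v a - v c →
      ∃ q ∈ N, ∃ b, v a - v b = w q)
    (N : Multiset P) (a c : V) (hN : (N.map w).sum = v a - v c) :
    ∃ (m : ℕ) (x : Fin (m + 1) → V) (p : Fin m → P), IsSimplePath v w x p ∧ x 0 = a ∧
      x (Fin.last m) = c ∧ (List.ofFn p : Multiset P) ≤ N := by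
  induction N using Multiset.strongInductionOn generalizing a with
  | ih N ih =>
  by_cases hac : a = c
  · exact ⟨0, fun _ => a, Fin.elim0,
      ⟨Function.injective_of_subsingleton (α := Fin 1) _, fun i => i.elim0⟩, rfl, hac, by simp⟩
  obtain ⟨q, hqN, b, hb⟩ := exists_step N a c hac hN
  obtain ⟨N, rfl⟩ := Multiset.exists_cons_of_mem hqN
  have hN_tail : (N.map w).sum = v b - v c := by
    rw [Multiset.map_cons, Multiset.sum_cons, ← hb] at hN
    exact add_left_cancel (hN.trans (sub_add_sub_cancel _ _ _).symm)
  obtain ⟨m, x, p, hx, rfl, rfl, hp⟩ := ih N (Multiset.lt_cons_self N q) b hN_tail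
  by_cases ha : a ∈ Set.range x
  · obtain ⟨j, rfl⟩ := ha
    obtain ⟨l, y, r, hy, hy_zero, hy_last, hr⟩ := hx.exists_suffix j
    have hrp : (List.ofFn r : Multiset P) ≤ List.ofFn p := Multiset.coe_le.2 hr.sublist.subperm
    exact ⟨l, y, r, hy, hy_zero, hy_last, (hrp.trans hp).trans (Multiset.le_cons_self N q)⟩
  · refine ⟨m + 1, _, _, hx.cons ha hb, rfl, rfl, ?_⟩
    rw [List.ofFn_cons, ← Multiset.cons_coe]
    exact Multiset.cons_le_cons q hp

end SimplePath

section SignedMultiset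

variable {E G : Type*} [AddCommGroup G]

lemma zsgn_not (s : Bool) : zsgn (!s) = -zsgn s := by cases s <;> rfl

/-- The vector of an edge taken with a sign. -/
def signedVec (α : E → G) (p : Bool × E) : G := zsgn p.1 • α p.2

lemma signedVec_true (α : E → G) (e : E) : signedVec α (true, e) = α e := by
  simp [signedVec, zsgn]

lemma signedVec_false (α : E → G) (e : E) : signedVec α (false, e) = -α e := by
  simp [signedVec, zsgn]

/-- The edges occurring with sign `s` in a multiset of signed edges. -/
def edgesOfSign (s : Bool) (M : Multiset (Bool × E)) : Multiset E :=
  (M.filter fun p => p.1 = s).map Prod.snd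

/-- The binomial `∏ U_e - ∏ U_e'` over the positive edges `e` and the negative edges `e'` of a
multiset of signed edges; `cycBin` is the case of the edges of a cycle. -/
def signedBinomial (R : Type*) [CommRing R] (M : Multiset (Bool × E)) : MvPolynomial E R :=
  ((edgesOfSign true M).map X).prod - ((edgesOfSign false M).map X).prod

lemma edgesOfSign_cons (s t : Bool) (e : E) (M : Multiset (Bool × E)) :
    edgesOfSign s ((t, e) ::ₘ M) = if t = s then e ::ₘ edgesOfSign s M else edgesOfSign s M := by
  by_cases h : t = s <;> simp [edgesOfSign, h]

lemma edgesOfSign_add (s : Bool) (M N : Multiset (Bool × E)) :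
    edgesOfSign s (M + N) = edgesOfSign s M + edgesOfSign s N := by
  simp [edgesOfSign]

lemma edgesOfSign_map_mk (s t : Bool) (S : Multiset E) :
    edgesOfSign s (S.map (Prod.mk t)) = if t = s then S else 0 := by
  by_cases h : t = s <;> simp [edgesOfSign, Multiset.filter_map, h]

lemma sum_map_signedVec (α : E → G) (M : Multiset (Bool × E)) :
    (M.map (signedVec α)).sum =
      ((edgesOfSign true M).map α).sum - ((edgesOfSign false M).map α).sum := by
  induction M using Multiset.induction_on with
  | empty => simp [edgesOfSign]
  | cons p M ih =>
    rw [Multiset.map_cons, Multiset.sum_cons, ih]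
    obtain ⟨_ | _, e⟩ := p
    · simp only [signedVec_false, edgesOfSign_cons, Bool.false_eq_true, if_true, if_false,
        Multiset.map_cons, Multiset.sum_cons]
      abel
    · simp only [signedVec_true, edgesOfSign_cons, Bool.true_eq_false, if_true, if_false,
        Multiset.map_cons, Multiset.sum_cons]
      abel

lemma signedBinomial_add (R : Type*) [CommRing R] (M N : Multiset (Bool × E)) :
    signedBinomial R (M + N) = ((edgesOfSign true N).map X).prod * signedBinomial R M +
      ((edgesOfSign false M).map X).prod * signedBinomial R N := by
  simp only [signedBinomial, edgesOfSign_add, Multiset.map_add, Multiset.prod_add]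
  ring

lemma exists_signedBinomial_eq (R : Type*) [CommRing R] {α : E → G} {S T : Multiset E}
    (hST : (S.map α).sum = (T.map α).sum) :
    ∃ M : Multiset (Bool × E), (M.map (signedVec α)).sum = 0 ∧
      signedBinomial R M = (S.map X).prod - (T.map X).prod := by
  have h_true : edgesOfSign true (S.map (Prod.mk true) + T.map (Prod.mk false)) = S := by
    simp [edgesOfSign_add, edgesOfSign_map_mk]
  have h_false : edgesOfSign false (S.map (Prod.mk true) + T.map (Prod.mk false)) = T := by
    simp [edgesOfSign_add, edgesOfSign_map_mk]
  refine ⟨S.map (Prod.mk true) + T.map (Prod.mk false), ?_, ?_⟩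
  · rw [sum_map_signedVec, h_true, h_false, hST, sub_self]
  · rw [signedBinomial, h_true, h_false]

end SignedMultiset

section Covering

variable {n : ℕ}

lemma vZ_negO (a : Option (SIdx n)) : vZ (negO a) = -vZ a := by
  cases a <;> simp [negO, negS, vZ, zsgn_not]

lemma IsOSGVec.exists_vZ_sub_eq {x : Fin n → ℤ} (hx : IsOSGVec n x) :
    ∃ a b : Option (SIdx n), vZ a - vZ b = x := by
  rcases hx with ⟨i, j, -, s, t, rfl⟩ | ⟨i, s, rfl⟩ | ⟨i, s, rfl⟩ | rfl
  · exact ⟨some (s, i), some (!t, j), by simp [vZ, zsgn_not]⟩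
  · exact ⟨some (s, i), some (!s, i), by simp [vZ, zsgn_not, two_mul, add_smul]⟩
  · exact ⟨some (s, i), none, by simp [vZ]⟩
  · exact ⟨none, none, sub_self _⟩

lemma exists_vZ_sub_eq_signedVec {E : Type*} {α : E → Fin n → ℤ} (hα : ∀ e, IsOSGVec n (α e))
    (p : Bool × E) : ∃ a b : Option (SIdx n), vZ a - vZ b = signedVec α p := by
  obtain ⟨s, e⟩ := p
  obtain ⟨a, b, hab⟩ := (hα e).exists_vZ_sub_eq
  cases s
  · exact ⟨b, a, by rw [signedVec_false, ← hab, neg_sub]⟩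
  · exact ⟨a, b, by rw [signedVec_true, hab]⟩

lemma zsgn_mul_vZ_apply (t : Bool) (i : Fin n) (a : Option (SIdx n)) :
    zsgn t * vZ a i = if a = some (t, i) then 1 else if negO a = some (t, i) then -1 else 0 := by
  rcases a with _ | ⟨s, j⟩
  · simp [vZ, negO]
  · by_cases hij : i = j
    · subst hij
      cases s <;> cases t <;> simp [vZ, zsgn, stdZ, negO, negS]
    · simp [vZ, stdZ, negO, negS, hij, Ne.symm hij]

lemma even_sum_vZ_iff (a : Option (SIdx n)) : Even (∑ i, vZ a i) ↔ a = none := by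
  rcases a with _ | ⟨_ | _, i⟩ <;> simp [vZ, zsgn, stdZ]

lemma exists_vZ_sub_eq_of_pos {t : Bool} {i : Fin n} {p q : Option (SIdx n)}
    (h : 0 < zsgn t * (vZ p - vZ q) i) : ∃ b, vZ (some (t, i)) - vZ b = vZ p - vZ q := by
  rw [Pi.sub_apply, mul_sub, zsgn_mul_vZ_apply, zsgn_mul_vZ_apply] at h
  by_cases hp : p = some (t, i)
  · exact ⟨q, by rw [hp]⟩
  · have hq : negO q = some (t, i) := by
      by_contra hq
      split_ifs at h <;> omega
    exact ⟨negO p, by rw [← hq, vZ_negO, vZ_negO]; abel⟩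

lemma exists_vZ_sub_eq_of_not_even {p q : Option (SIdx n)} (h : ¬Even (∑ i, (vZ p - vZ q) i)) :
    ∃ b, vZ none - vZ b = vZ p - vZ q := by
  simp only [Pi.sub_apply, Finset.sum_sub_distrib, Int.even_sub, even_sum_vZ_iff] at h
  by_cases hp : p = none
  · exact ⟨q, by rw [hp]⟩
  · have hq : q = none := by tauto
    exact ⟨negO p, by rw [hq, vZ_negO]; simp [vZ]⟩

lemma zsgn_mul_vZ_sub_pos {t : Bool} {i : Fin n} {c : Option (SIdx n)} (hc : some (t, i) ≠ c) :
    0 < zsgn t * (vZ (some (t, i)) - vZ c) i := by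
  rw [Pi.sub_apply, mul_sub, zsgn_mul_vZ_apply, zsgn_mul_vZ_apply, if_pos rfl, if_neg hc.symm]
  split_ifs <;> norm_num

lemma exists_vZ_sub_eq_of_sum_eq {W : Multiset (Fin n → ℤ)}
    (hW : ∀ x ∈ W, ∃ p q : Option (SIdx n), vZ p - vZ q = x) {a c : Option (SIdx n)} (hac : a ≠ c)
    (hsum : W.sum = vZ a - vZ c) : ∃ x ∈ W, ∃ b, vZ a - vZ b = x := by
  by_contra! no_step
  rcases a with _ | ⟨t, i⟩
  · let evenSum : AddSubmonoid (Fin n → ℤ) :=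
      { carrier := {x | Even (∑ i, x i)}
        zero_mem' := by simp
        add_mem' := fun {x y} hx hy => by
          simpa [Finset.sum_add_distrib] using Even.add hx hy }
    have hsum_mem : W.sum ∈ evenSum := multiset_sum_mem W fun x hx => by
      obtain ⟨p, q, rfl⟩ := hW x hx
      by_contra h
      obtain ⟨b, hb⟩ := exists_vZ_sub_eq_of_not_even h
      exact no_step _ hx b hb
    have heven : Even (∑ i, (vZ (none : Option (SIdx n)) - vZ c) i) :=
      hsum ▸ hsum_mem
    simp only [Pi.sub_apply, Finset.sum_sub_distrib, Int.even_sub, even_sum_vZ_iff] at heven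
    exact hac (heven.1 trivial).symm
  · let nonpos : AddSubmonoid (Fin n → ℤ) :=
      { carrier := {x | zsgn t * x i ≤ 0}
        zero_mem' := by simp
        add_mem' := fun {x y} hx hy => by simpa [mul_add] using add_nonpos hx hy }
    have hsum_mem : W.sum ∈ nonpos := multiset_sum_mem W fun x hx => by
      obtain ⟨p, q, rfl⟩ := hW x hx
      by_contra h
      obtain ⟨b, hb⟩ := exists_vZ_sub_eq_of_pos (not_le.1 h)
      exact no_step _ hx b hb
    exact (zsgn_mul_vZ_sub_pos hac).not_ge (hsum ▸ hsum_mem)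

lemma exists_vZ_sub_eq_signedVec_of_sum_eq {E : Type*} {α : E → Fin n → ℤ}
    (hα : ∀ e, IsOSGVec n (α e)) (N : Multiset (Bool × E)) (a c : Option (SIdx n)) (hac : a ≠ c)
    (hN : (N.map (signedVec α)).sum = vZ a - vZ c) :
    ∃ p ∈ N, ∃ b, vZ a - vZ b = signedVec α p := by
  have hN_diff : ∀ x ∈ N.map (signedVec α), ∃ p q : Option (SIdx n), vZ p - vZ q = x := by
    intro x hx
    obtain ⟨p, _, rfl⟩ := Multiset.mem_map.1 hx
    exact exists_vZ_sub_eq_signedVec hα p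
  obtain ⟨x, hx, b, hb⟩ := exists_vZ_sub_eq_of_sum_eq hN_diff hac hN
  obtain ⟨p, hp, rfl⟩ := Multiset.mem_map.1 hx
  exact ⟨p, hp, b, hb⟩

end Covering

section Cycles

variable {n : ℕ} {E : Type} {α : E → Fin n → ℤ} {ℓ : E → Fin n}

lemma Arc.vZ_sub_eq {e : E} {a b : Option (SIdx n)} (h : Arc α ℓ e a b) :
    vZ a - vZ b = α e := by
  rcases h with ⟨_, h⟩ | ⟨h, s, rfl, rfl⟩
  · exact h
  · rw [sub_self, h]

namespace SCycle

/-- The edges of a cycle, each with the sign with which it is traversed. -/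
def signedEdges (C : SCycle n E α ℓ) : Multiset (Bool × E) :=
  Finset.univ.val.map fun m => (C.sg m, C.edg m)

lemma signedVec_eq (C : SCycle n E α ℓ) (m : Fin (C.len + 1)) :
    signedVec α (C.sg m, C.edg m) = vZ (C.vtx m) - vZ (C.vtx (m + 1)) := by
  have hvalid := C.valid m
  cases hs : C.sg m <;> simp only [hs, if_true, Bool.false_eq_true, if_false] at hvalid
  · rw [signedVec_false, ← hvalid.vZ_sub_eq, neg_sub]
  · rw [signedVec_true, hvalid.vZ_sub_eq]

lemma sum_map_signedVec_signedEdges (C : SCycle n E α ℓ) :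
    (C.signedEdges.map (signedVec α)).sum = 0 := by
  calc (C.signedEdges.map (signedVec α)).sum
      = ∑ m, signedVec α (C.sg m, C.edg m) := by
        rw [signedEdges, Multiset.map_map]; rfl
    _ = ∑ m, vZ (C.vtx m) - ∑ m, vZ (C.vtx (m + 1)) := by
        simp only [signedVec_eq, Finset.sum_sub_distrib]
    _ = 0 := sub_eq_zero.2 (Equiv.sum_comp (Equiv.addRight 1) fun m => vZ (C.vtx m)).symm

lemma signedEdges_ne_zero (C : SCycle n E α ℓ) : C.signedEdges ≠ 0 := by
  simp [signedEdges, ← Multiset.card_eq_zero]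

/-- The one-edge cycle at `+ℓ e` on a positive loop `e`, traversed with sign `s`. -/
def ofLoop {e : E} (he : α e = 0) (s : Bool) : SCycle n E α ℓ where
  len := 0
  vtx _ := some (true, ℓ e)
  edg _ := e
  sg _ := s
  inj := Function.injective_of_subsingleton (α := Fin 1) _
  valid _ := by
    have harc : Arc α ℓ e (some (true, ℓ e)) (some (true, ℓ e)) := Or.inr ⟨he, true, rfl, rfl⟩
    split_ifs <;> exact harc

/-- The cycle obtained from a path by adding an edge from its last vertex to its first. -/
def ofPath {m : ℕ} {x : Fin (m + 1) → Option (SIdx n)} {p : Fin m → Bool × E}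
    (hx : IsSimplePath vZ (signedVec α) x p) {q : Bool × E}
    (hq : vZ (x (Fin.last m)) - vZ (x 0) = signedVec α q)
    (hp_ne : ∀ i, α (p i).2 ≠ 0) (hq_ne : α q.2 ≠ 0) : SCycle n E α ℓ where
  len := m
  vtx := x
  edg i := (Fin.snoc (α := fun _ => Bool × E) p q i).2
  sg i := (Fin.snoc (α := fun _ => Bool × E) p q i).1
  inj := hx.injective
  valid i := by
    have arc_of_step {a b : Option (SIdx n)} {r : Bool × E} (hr : α r.2 ≠ 0)
        (hab : vZ a - vZ b = signedVec α r) :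
        if r.1 then Arc α ℓ r.2 a b else Arc α ℓ r.2 b a := by
      obtain ⟨_ | _, e⟩ := r
      · exact Or.inl ⟨hr, by rw [← neg_sub, hab, signedVec_false, neg_neg]⟩
      · exact Or.inl ⟨hr, by rw [hab, signedVec_true]⟩
    rcases Fin.eq_castSucc_or_eq_last i with ⟨i, rfl⟩ | rfl
    · rw [Fin.coeSucc_eq_succ, Fin.snoc_castSucc]
      exact arc_of_step (hp_ne i) (hx.step i)
    · rw [Fin.last_add_one, Fin.snoc_last]
      exact arc_of_step hq_ne hq

lemma signedEdges_ofPath {m : ℕ} {x : Fin (m + 1) → Option (SIdx n)} {p : Fin m → Bool × E}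
    (hx : IsSimplePath vZ (signedVec α) x p) {q : Bool × E}
    (hq : vZ (x (Fin.last m)) - vZ (x 0) = signedVec α q)
    (hp_ne : ∀ i, α (p i).2 ≠ 0) (hq_ne : α q.2 ≠ 0) :
    (ofPath (ℓ := ℓ) hx hq hp_ne hq_ne).signedEdges = q ::ₘ (List.ofFn p : Multiset _) := by
  have h : (ofPath (ℓ := ℓ) hx hq hp_ne hq_ne).signedEdges =
      List.ofFn (Fin.snoc (α := fun _ => Bool × E) p q) := Fin.univ_val_map _
  rw [h, List.ofFn_succ_last, Fin.snoc_last, ← Multiset.coe_add, Multiset.coe_singleton, add_comm,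
    Multiset.singleton_add]
  simp only [Fin.snoc_castSucc]

lemma exists_signedEdges_le (hα : ∀ e, IsOSGVec n (α e)) {M : Multiset (Bool × E)} (hM : M ≠ 0)
    (hsum : (M.map (signedVec α)).sum = 0) : ∃ C : SCycle n E α ℓ, C.signedEdges ≤ M := by
  by_cases hloop : ∃ p ∈ M, α p.2 = 0
  · obtain ⟨⟨s, e⟩, hp, he⟩ := hloop
    have hedges : (ofLoop (ℓ := ℓ) he s).signedEdges = {(s, e)} := rfl
    exact ⟨ofLoop he s, hedges ▸ Multiset.singleton_le.2 hp⟩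
  push Not at hloop
  obtain ⟨q, hqM⟩ := Multiset.exists_mem_of_ne_zero hM
  obtain ⟨N, rfl⟩ := Multiset.exists_cons_of_mem hqM
  obtain ⟨a, b, hab⟩ := exists_vZ_sub_eq_signedVec hα q
  have hN : (N.map (signedVec α)).sum = vZ b - vZ a := by
    rw [Multiset.map_cons, Multiset.sum_cons, ← hab] at hsum
    rw [eq_neg_of_add_eq_zero_right hsum, neg_sub]
  obtain ⟨m, x, p, hx, rfl, rfl, hpN⟩ :=
    exists_isSimplePath_of_sum_eq (exists_vZ_sub_eq_signedVec_of_sum_eq hα) N b a hN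
  have hp_ne (i : Fin m) : α (p i).2 ≠ 0 :=
    hloop _ (Multiset.mem_cons_of_mem (Multiset.mem_of_le hpN (by simp)))
  exact ⟨ofPath hx hab hp_ne (hloop q hqM), by
    rw [signedEdges_ofPath]; exact Multiset.cons_le_cons q hpN⟩

end SCycle

lemma cycBin_eq_signedBinomial (k : Type) [Field k] (C : SCycle n E α ℓ) :
    cycBin k C = signedBinomial k C.signedEdges := by
  simp only [signedBinomial, edgesOfSign, SCycle.signedEdges, Multiset.filter_map,
    Multiset.map_map]
  rfl

lemma signedBinomial_mem_span_cycBin (k : Type) [Field k] (hα : ∀ e, IsOSGVec n (α e))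
    {M : Multiset (Bool × E)} (hM : (M.map (signedVec α)).sum = 0) :
    signedBinomial k M ∈ Ideal.span {f | ∃ C : SCycle n E α ℓ, f = cycBin k C} := by
  induction M using Multiset.strongInductionOn with
  | ih M ih =>
  by_cases hM_zero : M = 0
  · simp [hM_zero, signedBinomial, edgesOfSign]
  obtain ⟨C, hC⟩ := SCycle.exists_signedEdges_le (ℓ := ℓ) hα hM_zero hM
  obtain ⟨N, rfl⟩ := Multiset.le_iff_exists_add.1 hC
  rw [Multiset.map_add, Multiset.sum_add, C.sum_map_signedVec_signedEdges, zero_add] at hM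
  have hlt : N < C.signedEdges + N :=
    lt_add_of_pos_left N (pos_iff_ne_zero.2 C.signedEdges_ne_zero)
  rw [signedBinomial_add, ← cycBin_eq_signedBinomial]
  exact Ideal.add_mem _ (Ideal.mul_mem_left _ _ (Ideal.subset_span ⟨C, rfl⟩))
    (Ideal.mul_mem_left _ _ (ih N hlt hM))

theorem ker_laurentHom_eq_span_cycBin (k : Type) [Field k] (hα : ∀ e, IsOSGVec n (α e)) :
    RingHom.ker (laurentHom n k E α) =
      Ideal.span {f | ∃ C : SCycle n E α ℓ, f = cycBin k C} := by
  have sum_eq_iff (S T : Multiset E) :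
      (S.map fun e => Finsupp.equivFunOnFinite.symm (α e)).sum =
        (T.map fun e => Finsupp.equivFunOnFinite.symm (α e)).sum ↔
      (S.map α).sum = (T.map α).sum := by
    have h (S : Multiset E) : (S.map fun e => Finsupp.equivFunOnFinite.symm (α e)).sum =
        (Finsupp.linearEquivFunOnFinite ℤ ℤ (Fin n)).symm (S.map α).sum := by
      rw [map_multiset_sum, Multiset.map_map]; rfl
    rw [h, h, EmbeddingLike.apply_eq_iff_eq]
  rw [laurentHom, ker_aeval_single]
  simp only [sum_eq_iff]
  apply le_antisymm <;> rw [Ideal.span_le]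
  · rintro _ ⟨S, T, hST, rfl⟩
    obtain ⟨M, hM, hM_eq⟩ := exists_signedBinomial_eq k hST
    rw [← hM_eq]
    exact signedBinomial_mem_span_cycBin k hα hM
  · rintro _ ⟨C, rfl⟩
    have hC := C.sum_map_signedVec_signedEdges
    rw [sum_map_signedVec, sub_eq_zero] at hC
    exact Ideal.subset_span ⟨_, _, hC, cycBin_eq_signedBinomial k C⟩

lemma cycBin_eq_zero_of_fixedInv (k : Type) [Field k] {C : SCycle n E α ℓ} (hC : FixedInv C) :
    cycBin k C = 0 := by
  obtain ⟨r, hr⟩ := hC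
  rw [cycBin, sub_eq_zero]
  refine Finset.prod_equiv (Equiv.addRight r) (fun m => ?_) (fun m _ => ?_)
  · simp [(hr m).2.2]
  · simp [(hr m).2.1]

theorem span_cycBin_not_fixedInv (k : Type) [Field k] :
    Ideal.span {f | ∃ C : SCycle n E α ℓ, ¬FixedInv C ∧ f = cycBin k C} =
      Ideal.span {f | ∃ C : SCycle n E α ℓ, f = cycBin k C} := by
  refine le_antisymm (Ideal.span_mono fun f ⟨C, _, hf⟩ => ⟨C, hf⟩) (Ideal.span_le.2 ?_)
  rintro _ ⟨C, rfl⟩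
  by_cases hC : FixedInv C
  · rw [cycBin_eq_zero_of_fixedInv k hC]
    exact Ideal.zero_mem _
  · exact Ideal.subset_span ⟨C, hC, rfl⟩

end Cycles

theorem statement_0_general (n : ℕ) (k : Type) [Field k] (E : Type) (α : E → (Fin n → ℤ))
    (ℓ : E → Fin n) (hOSG : ∀ e : E, IsOSGVec n (α e)) :
    RingHom.ker (laurentHom n k E α) =
      Ideal.span {f | ∃ C : SCycle n E α ℓ, ¬FixedInv C ∧ f = cycBin k C} ∧
    (∀ C : SCycle n E α ℓ, FixedInv C → cycBin k C = 0) ∧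
    RingHom.ker (laurentHom n k E α) =
      Ideal.span {f | ∃ C : SCycle n E α ℓ, f = cycBin k C} := by
  have hker := ker_laurentHom_eq_span_cycBin (ℓ := ℓ) k hOSG
  exact ⟨hker.trans (span_cycBin_not_fixedInv k).symm,
    fun _ hC => cycBin_eq_zero_of_fixedInv k hC, hker⟩

theorem statement_0 (n : ℕ) (hn : 1 ≤ n) (k : Type) [Field k]
    (E : Type) [Fintype E] (α : E → (Fin n → ℤ)) (ℓ : E → Fin n)
    (hOSG : ∀ e : E, IsOSGVec n (α e)) :
    RingHom.ker (laurentHom n k E α) =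
      Ideal.span {f | ∃ C : SCycle n E α ℓ, ¬FixedInv C ∧ f = cycBin k C} ∧
    (∀ C : SCycle n E α ℓ, FixedInv C → cycBin k C = 0) ∧
    RingHom.ker (laurentHom n k E α) =
      Ideal.span {f | ∃ C : SCycle n E α ℓ, f = cycBin k C} := by
  exact statement_0_general n k E α ℓ hOSG
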